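/- Let F = (f_1, f_2) be a multigerm in ℂ^n (n ≥ 3) with f_1 = (t,0,…,0) and with the 8-jet of f_2 equal to (t³, t⁶, t⁷, 0, …, 0). Then F is not simple. -/

import Mathlib

/-!
The pairs `(axis, X)` with `X ≡ (t³, t⁶ + a t⁸, t⁷ + c t⁸, 0, …)` modulo `t⁹` have the modulus
`a / c²`. Let `g` carry such a pair to the one with parameters `(a', c')`, the second component
being reparametrized by `h`. Comparing first coordinates, `h³` is a multiple of `t³` modulo `t⁶`, so
`h = u t + O(t⁴)` with `u ≠ 0`. Away from the axis only the linear part of `g` matters modulo `t⁹`: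
`g` preserves the axis, `X` is at distance `O(t⁶)` from it, and `X = O(t³)`. Hence a single linear
map sends the vectors `e₁`, `e₂`, `a e₁ + c e₂` to `u⁶ e₁`, `u⁷ e₂`, `u⁸ (a' e₁ + c' e₂)`, which
gives `a = u² a'` and `c = u c'`. Varying `(a, c)` thus produces infinitely many classes arbitrarily
close to the given pair.
-/

open scoped Topology

namespace CurveSing

/-- Pad a curve in `ℂ^d` to a curve in `ℂ^n` by appending zero coordinates. -/
def pad (d n : ℕ) (f : ℂ → Fin d → ℂ) : ℂ → Fin n → ℂ :=
  fun t j => if hj : (j : ℕ) < d then f t ⟨(j : ℕ), hj⟩ else 0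

/-- The curve `t ↦ (0,…,0,t,0,…,0)` (the `i`-th coordinate axis of `ℂ^n`). -/
def axis (n i : ℕ) : ℂ → Fin n → ℂ := fun t j => if (j : ℕ) = i then t else 0

/-- The multigerm consisting of the `n` coordinate axes of `ℂ^n`. -/
def Gn (n : ℕ) : Fin n → ℂ → Fin n → ℂ := fun i => axis n (i : ℕ)

/-- A (representative of a) curve germ in `ℂ^n`. -/
def IsCurveGerm (n : ℕ) (f : ℂ → Fin n → ℂ) : Prop :=
  AnalyticAt ℂ f 0 ∧ f 0 = 0

/-- A multigerm with `k` components in `ℂ^n`: each component is a curve germ and the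
images of sufficiently small representatives of distinct components meet only at `0`. -/
def IsMultigerm (n k : ℕ) (F : Fin k → ℂ → Fin n → ℂ) : Prop :=
  (∀ i, IsCurveGerm n (F i)) ∧
  ∃ ε > (0 : ℝ), ∀ i j : Fin k, i ≠ j → ∀ s t : ℂ,
    ‖s‖ < ε → ‖t‖ < ε → F i s = F j t → F i s = 0

/-- A germ of a biholomorphism `(E,0) → (E,0)`. -/
def IsBiholoGerm {E : Type*} [NormedAddCommGroup E] [NormedSpace ℂ E] (g : E → E) : Prop :=
  AnalyticAt ℂ g 0 ∧ g 0 = 0 ∧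
  ∃ g' : E → E, AnalyticAt ℂ g' 0 ∧ g' 0 = 0 ∧
    (∀ᶠ x in 𝓝 (0 : E), g' (g x) = x) ∧ (∀ᶠ x in 𝓝 (0 : E), g (g' x) = x)

/-- `A`-equivalence of multigerms with `k` components in `ℂ^n`. -/
def AEquiv (n k : ℕ) (F F' : Fin k → ℂ → Fin n → ℂ) : Prop :=
  ∃ g : (Fin n → ℂ) → Fin n → ℂ, IsBiholoGerm g ∧
    ∃ h : Fin k → ℂ → ℂ, (∀ i, IsBiholoGerm (h i)) ∧
      ∀ i, (fun t => g (F i t)) =ᶠ[𝓝 (0 : ℂ)] fun t => F' i (h i t)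

/-- Stable `A`-equivalence: the two multigerms become `A`-equivalent after the standard
inclusions into a common `ℂ^N`. -/
def StablyAEquiv (n n' k : ℕ) (F : Fin k → ℂ → Fin n → ℂ)
    (F' : Fin k → ℂ → Fin n' → ℂ) : Prop :=
  ∃ N, n ≤ N ∧ n' ≤ N ∧
    AEquiv N k (fun i => pad n N (F i)) (fun i => pad n' N (F' i))

/-- The `m`-jet of a curve, recorded as the tuple of iterated derivatives at `0`
of orders `0,…,m` (this determines and is determined by the degree-`m` Taylor
polynomial at `0`). -/
noncomputable def jet (n m : ℕ) (f : ℂ → Fin n → ℂ) : Fin (m + 1) → Fin n → ℂ :=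
  fun i => iteratedDeriv (i : ℕ) f 0

/-- The `m`-jet of a multigerm. -/
noncomputable def jetF (n k m : ℕ) (F : Fin k → ℂ → Fin n → ℂ) : Fin k → Fin (m + 1) → Fin n → ℂ :=
  fun i => jet n m (F i)

/-- A multigerm is simple if some neighbourhood of one of its jets meets only finitely
many `A`-equivalence classes of multigerms. -/
def Simple (n k : ℕ) (F : Fin k → ℂ → Fin n → ℂ) : Prop :=
  ∃ m : ℕ, ∃ U : Set (Fin k → Fin (m + 1) → Fin n → ℂ), IsOpen U ∧ jetF n k m F ∈ U ∧
    ∃ (N : ℕ) (R : Fin N → Fin k → ℂ → Fin n → ℂ),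
      ∀ G : Fin k → ℂ → Fin n → ℂ, IsMultigerm n k G → jetF n k m G ∈ U →
        ∃ i, AEquiv n k G (R i)

/-- A curve germ is regular if its derivative at `0` does not vanish. -/
def IsRegular (n : ℕ) (f : ℂ → Fin n → ℂ) : Prop := deriv f 0 ≠ 0

/-- `F` is stably `A`-equivalent to the pair with first component the regular curve
`(t,0,…,0)` and second component `g` (a curve in `ℂ^{d'}`). -/
def PairNF (d : ℕ) (F : Fin 2 → ℂ → Fin d → ℂ) (d' : ℕ) (g : ℂ → Fin d' → ℂ) : Prop :=
  StablyAEquiv d d' 2 F ![axis d' 0, g]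

end CurveSing

namespace CurveSing

open Asymptotics Filter

section Asymptotics

variable {𝕜 : Type*} [NontriviallyNormedField 𝕜]
  {E : Type*} [NormedAddCommGroup E] [NormedSpace 𝕜 E]
  {F : Type*} [NormedAddCommGroup F] [NormedSpace 𝕜 F]

lemma tendsto_pow_nhds_zero {n : ℕ} (hn : n ≠ 0) :
    Tendsto (fun t : 𝕜 => t ^ n) (𝓝 0) (𝓝 0) :=
  (continuous_pow n).tendsto' 0 0 (zero_pow hn)

lemma isBigO_pow_smul {r : 𝕜 → E} (hr : ContinuousAt r 0) (n : ℕ) :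
    (fun t : 𝕜 => t ^ n • r t) =O[𝓝 0] fun t => t ^ n := by
  simpa using (isBigO_refl (fun t : 𝕜 => t ^ n) (𝓝 0)).smul (hr.isBigO_one 𝕜)

lemma isBigO_pow_pow_of_le {m n : ℕ} (h : n ≤ m) :
    (fun t : 𝕜 => t ^ m) =O[𝓝 0] fun t => t ^ n := by
  obtain rfl | hlt := h.eq_or_lt
  exacts [isBigO_refl _ _, (isLittleO_pow_pow hlt).isBigO]

lemma eq_zero_of_pow_smul_isBigO {v : E} {n : ℕ}
    (h : (fun t : 𝕜 => t ^ n • v) =O[𝓝 0] fun t => t ^ (n + 1)) : v = 0 := by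
  by_contra hv
  have hself : (fun t : 𝕜 => t ^ n • v) =o[𝓝 0] fun t : 𝕜 => t ^ n • v :=
    (h.trans_isLittleO (isLittleO_pow_pow n.lt_succ_self)).trans_isBigO
      (.of_bound ‖v‖⁻¹ (.of_forall fun t => by simp [norm_smul, field]))
  have hne : ∀ᶠ t : 𝕜 in 𝓝[≠] 0, t ^ n • v ≠ 0 := by
    filter_upwards [self_mem_nhdsWithin] with t ht using smul_ne_zero (pow_ne_zero n ht) hv
  exact isLittleO_irrefl hne.frequently (hself.mono nhdsWithin_le_nhds)

lemma eq_zero_of_sum_pow_smul_isBigO {m n : ℕ} {v : Fin m → E}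
    (h : (fun t : 𝕜 => ∑ i : Fin m, t ^ (n + i) • v i) =O[𝓝 0] fun t => t ^ (n + m)) :
    v = 0 := by
  induction m generalizing n with
  | zero => exact Subsingleton.elim _ _
  | succ m ih =>
    have htail : (fun t : 𝕜 => ∑ i : Fin m, t ^ (n + 1 + i) • v i.succ) =O[𝓝 0]
        fun t => t ^ (n + 1) := by
      refine (isBigO_pow_smul (r := fun t : 𝕜 => ∑ i : Fin m, t ^ (i : ℕ) • v i.succ)
        (by fun_prop) (n + 1)).congr_left fun t => ?_
      simp only [Finset.smul_sum, smul_smul, ← pow_add]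
    have hsplit (t : 𝕜) : ∑ i : Fin (m + 1), t ^ (n + i) • v i =
        t ^ n • v 0 + ∑ i : Fin m, t ^ (n + 1 + i) • v i.succ := by
      simp [Fin.sum_univ_succ, add_assoc, add_comm 1]
    have hhead : v 0 = 0 := eq_zero_of_pow_smul_isBigO (𝕜 := 𝕜) (n := n) <|
      ((h.trans (isBigO_pow_pow_of_le (by lia))).sub htail).congr_left fun t => by
        rw [hsplit, add_sub_cancel_right]
    have hrest : (fun i : Fin m => v i.succ) = 0 :=
      ih (n := n + 1) <| h.congr
        (fun t => by rw [hsplit, hhead, smul_zero, zero_add]) fun t => by ring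
    exact funext <| Fin.cases hhead (congrFun hrest)

lemma isBigO_image_sub_image_sub_fderiv {α : Type*} {l : Filter α} {g : E → F} {x₀ : E}
    (hg : AnalyticAt 𝕜 g x₀) {X Y : α → E} {r s : α → 𝕜} (hr : Tendsto r l (𝓝 0))
    (hX : (fun t => X t - x₀) =O[l] r) (hY : (fun t => Y t - x₀) =O[l] r)
    (hXY : (fun t => X t - Y t) =O[l] s) :
    (fun t => g (X t) - g (Y t) - fderiv 𝕜 g x₀ (X t - Y t)) =O[l] fun t => r t * s t := by
  obtain ⟨p, hp⟩ := hg
  have htends {Z : α → E} (hZ : (fun t => Z t - x₀) =O[l] r) : Tendsto Z l (𝓝 x₀) :=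
    tendsto_sub_nhds_zero_iff.mp (hZ.trans_tendsto hr)
  have hXY₀ : Tendsto (fun t => (X t, Y t)) l (𝓝 (x₀, x₀)) :=
    (htends hX).prodMk_nhds (htends hY)
  have hquad := hp.isBigO_image_sub_norm_mul_norm_sub.comp_tendsto hXY₀
  refine (hquad.congr_left fun t => ?_).trans ((hX.prod_left hY).norm_left.mul hXY.norm_left)
  simp [hp.fderiv_eq, Matrix.vec_single_eq_const]

lemma isBigO_pow_sub_pow_of_isBigO [CharZero 𝕜] {α : Type*} {l : Filter α} {φ : α → 𝕜} {u : 𝕜}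
    (hu : u ≠ 0) (hφ : Tendsto φ l (𝓝 u)) {G : Type*} [Norm G] {e : α → G} {p : ℕ}
    (hp : p ≠ 0) (h : (fun t => φ t ^ p - u ^ p) =O[l] e) (q : ℕ) :
    (fun t => φ t ^ q - u ^ q) =O[l] e := by
  have hφu : Tendsto (fun t => (φ t, u)) l (𝓝 u ×ˢ pure u) := hφ.prodMk tendsto_const_pure
  have hroot : (fun t => φ t - u) =O[l] fun t => φ t ^ p - u ^ p :=
    ((hasDerivAt_pow p u).isTheta_sub (by simp [hp, hu])).isBigO_symm.comp_tendsto hφu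
  exact ((differentiableAt_pow (𝕜 := 𝕜) q).isBigO_sub.comp_tendsto hφ).trans (hroot.trans h)

/-- The unit `φ = h / t` is constant modulo `t ^ m` as soon as its power `φ ^ p` is. -/
lemma isBigO_pow_sub_deriv_mul_pow [CharZero 𝕜] {h : 𝕜 → 𝕜} (hh : DifferentiableAt 𝕜 h 0)
    (h0 : h 0 = 0) (hu : deriv h 0 ≠ 0) {p m : ℕ} (hp : p ≠ 0) (hm : m ≠ 0) {α : 𝕜}
    (hα : (fun t => h t ^ p - α * t ^ p) =O[𝓝 0] fun t => t ^ (p + m)) (q : ℕ) :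
    (fun t => h t ^ q - (deriv h 0 * t) ^ q) =O[𝓝 0] fun t => t ^ (q + m) := by
  set φ := dslope h 0
  have hfactor (t : 𝕜) : h t = t * φ t := by simpa using (sub_smul_dslope_of_zero h0 t).symm
  have hφ : Tendsto φ (𝓝[≠] 0) (𝓝 (deriv h 0)) := by
    simpa [φ, dslope_same] using
      (continuousAt_dslope_same.mpr hh).tendsto.mono_left nhdsWithin_le_nhds
  have hφα : (fun t => φ t ^ p - α) =O[𝓝[≠] 0] fun t => t ^ m := by
    have hinv := isBigO_refl (fun t : 𝕜 => (t ^ p)⁻¹) (𝓝[≠] 0)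
    refine (hinv.mul (hα.mono nhdsWithin_le_nhds)).congr' ?_ ?_
    · filter_upwards [self_mem_nhdsWithin] with t (ht : t ≠ 0)
      rw [hfactor, mul_pow]
      field_simp
    · filter_upwards [self_mem_nhdsWithin] with t (ht : t ≠ 0)
      rw [pow_add]
      field_simp
  have hlim : Tendsto (fun t => φ t ^ p) (𝓝[≠] 0) (𝓝 α) :=
    tendsto_sub_nhds_zero_iff.mp <| hφα.trans_tendsto <|
      (tendsto_pow_nhds_zero hm).mono_left nhdsWithin_le_nhds
  obtain rfl : α = deriv h 0 ^ p := tendsto_nhds_unique hlim (hφ.pow p)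
  have hφq := isBigO_pow_sub_pow_of_isBigO hu hφ hp hφα q
  rw [← nhdsNE_sup_pure]
  refine IsBigO.sup ?_ (isBigO_pure.mpr fun _ => by simp [h0])
  refine ((isBigO_refl (fun t : 𝕜 => t ^ q) _).mul hφq).congr (fun t => ?_) fun t => ?_
  · rw [hfactor]; ring
  · ring

end Asymptotics

section Germs

variable {E : Type*} [NormedAddCommGroup E] [NormedSpace ℂ E]

lemma IsBiholoGerm.tendsto_zero {g : E → E} (hg : IsBiholoGerm g) : Tendsto g (𝓝 0) (𝓝 0) := by
  simpa only [hg.2.1] using hg.1.continuousAt.tendsto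

lemma IsBiholoGerm.exists_inv {g : E → E} (hg : IsBiholoGerm g) :
    ∃ g' : E → E, IsBiholoGerm g' ∧
      (∀ᶠ x in 𝓝 (0 : E), g' (g x) = x) ∧ ∀ᶠ x in 𝓝 (0 : E), g (g' x) = x := by
  obtain ⟨ga, g0, g', ga', g0', hl, hr⟩ := hg
  exact ⟨g', ⟨ga', g0', g, ga, g0, hr, hl⟩, hl, hr⟩

lemma IsBiholoGerm.comp {f g : E → E} (hf : IsBiholoGerm f) (hg : IsBiholoGerm g) :
    IsBiholoGerm (f ∘ g) := by
  obtain ⟨f', hf', f'f, ff'⟩ := hf.exists_inv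
  obtain ⟨g', hg', g'g, gg'⟩ := hg.exists_inv
  refine ⟨hf.1.comp_of_eq hg.1 hg.2.1, by simp [hf.2.1, hg.2.1], g' ∘ f',
    hg'.1.comp_of_eq hf'.1 hf'.2.1, by simp [hf'.2.1, hg'.2.1], ?_, ?_⟩
  · filter_upwards [g'g, hg.tendsto_zero.eventually f'f] with x hx hgx
    simp [hgx, hx]
  · filter_upwards [ff', hf'.tendsto_zero.eventually gg'] with x hx hfx
    simp [hfx, hx]

lemma IsBiholoGerm.deriv_ne_zero {h : ℂ → ℂ} (hh : IsBiholoGerm h) : deriv h 0 ≠ 0 := by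
  intro hderiv
  obtain ⟨h', hh', -, hr⟩ := hh.exists_inv
  have h0 : HasDerivAt h 0 (h' 0) := by
    simpa only [hh'.2.1, hderiv] using hh.1.differentiableAt.hasDerivAt
  exact not_differentiableAt_of_local_left_inverse_hasDerivAt_zero h0 hr hh'.1.differentiableAt

variable {n k : ℕ} {F G R : Fin k → ℂ → Fin n → ℂ}

lemma IsCurveGerm.tendsto_zero {f : ℂ → Fin n → ℂ} (hf : IsCurveGerm n f) :
    Tendsto f (𝓝 0) (𝓝 0) := by
  simpa only [hf.2] using hf.1.continuousAt.tendsto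

lemma AEquiv.symm (hF : ∀ i, IsCurveGerm n (F i)) (h : AEquiv n k F G) : AEquiv n k G F := by
  obtain ⟨g, hg, p, hp, he⟩ := h
  obtain ⟨g', hg', g'g, -⟩ := hg.exists_inv
  choose p' hp' _ pp' using fun i => (hp i).exists_inv
  refine ⟨g', hg', p', hp', fun i => ?_⟩
  filter_upwards [(hp' i).tendsto_zero.eventually (he i), pp' i,
    ((hF i).tendsto_zero.comp (hp' i).tendsto_zero).eventually g'g] with t hgF hpp' hg'g
  simpa only [Function.comp_apply, hgF, hpp'] using hg'g

lemma AEquiv.trans (h : AEquiv n k F G) (h' : AEquiv n k G R) : AEquiv n k F R := by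
  obtain ⟨g, hg, p, hp, he⟩ := h
  obtain ⟨g', hg', p', hp', he'⟩ := h'
  refine ⟨g' ∘ g, hg'.comp hg, fun i => p' i ∘ p i, fun i => (hp' i).comp (hp i), fun i => ?_⟩
  filter_upwards [he i, (hp i).tendsto_zero.eventually (he' i)] with t hgF hg'G
  simp only [Function.comp_apply, hgF, hg'G]

lemma not_simple_of_tendsto_jetF {ι : Type*} {l : Filter ι} {G : ι → Fin k → ℂ → Fin n → ℂ}
    (hG : ∀ i, IsMultigerm n k (G i))
    (hlim : ∀ m, Tendsto (fun i => jetF n k m (G i)) l (𝓝 (jetF n k m F)))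
    (hinf : ∀ s ∈ l, ∃ t ⊆ s, t.Infinite ∧ t.Pairwise fun i j => ¬ AEquiv n k (G i) (G j)) :
    ¬ Simple n k F := by
  rintro ⟨m, U, hU, hFU, N, R, hR⟩
  obtain ⟨t, htU, ht, hinequiv⟩ := hinf _ (hlim m (hU.mem_nhds hFU))
  have := ht.to_subtype
  choose cls hcls using fun i : t => hR (G i) (hG i) (htU i.2)
  obtain ⟨i, j, hij, heq⟩ := Finite.exists_ne_map_eq_of_infinite cls
  exact hinequiv i.2 j.2 (Subtype.coe_injective.ne hij) <|
    (hcls i).trans (heq ▸ (hcls j).symm (hG j).1)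

lemma isBigO_sub_of_jet_eq {m : ℕ} {f g : ℂ → Fin n → ℂ} (hf : AnalyticAt ℂ f 0)
    (hg : AnalyticAt ℂ g 0) (hfg : jet n m f = jet n m g) :
    (fun t => f t - g t) =O[𝓝 0] fun t => t ^ (m + 1) := by
  have horder : ((m + 1 : ℕ) : ℕ∞) ≤ analyticOrderAt (f - g) 0 := by
    rw [natCast_le_analyticOrderAt_iff_iteratedDeriv_eq_zero (hf.sub hg)]
    intro i hi
    rw [iteratedDeriv_sub hf.contDiffAt hg.contDiffAt, sub_eq_zero]
    exact congrFun hfg ⟨i, hi⟩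
  obtain ⟨r, hr, hfr⟩ := (natCast_le_analyticOrderAt (hf.sub hg)).mp horder
  refine (isBigO_pow_smul hr.continuousAt (m + 1)).congr' ?_ .rfl
  filter_upwards [hfr] with t ht
  simpa using ht.symm

lemma tendsto_jet_add_smul {ι : Type*} {l : Filter ι} {f : ℂ → Fin n → ℂ} {φ : ℂ → ℂ}
    {v : ι → Fin n → ℂ} (hf : AnalyticAt ℂ f 0) (hφ : AnalyticAt ℂ φ 0)
    (hv : Tendsto v l (𝓝 0)) (m : ℕ) :
    Tendsto (fun i => jet n m fun t => f t + φ t • v i) l (𝓝 (jet n m f)) := by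
  refine tendsto_pi_nhds.mpr fun j => ?_
  have hjet (i : ι) : jet n m (fun t => f t + φ t • v i) j =
      jet n m f j + iteratedDeriv j φ 0 • v i := by
    have hφv : AnalyticAt ℂ (fun t => φ t • v i) 0 := hφ.smul analyticAt_const
    rw [jet, iteratedDeriv_fun_add hf.contDiffAt hφv.contDiffAt,
      iteratedDeriv_smul_const hφ.contDiffAt, jet]
  simpa [hjet] using (tendsto_const_nhds (x := jet n m f j)).add
    (hv.const_smul (iteratedDeriv j φ 0))

end Germs

section Axis

variable {n : ℕ}

lemma axis_val (i : Fin n) (s : ℂ) : axis n i s = Pi.single i s := by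
  ext j
  simp [axis, Pi.single_apply, Fin.ext_iff]

lemma isCurveGerm_axis (i : Fin n) : IsCurveGerm n (axis n i) := by
  have haxis : axis n i = ContinuousLinearMap.single ℂ (fun _ : Fin n => ℂ) i :=
    funext (axis_val i)
  exact ⟨haxis ▸ ContinuousLinearMap.analyticAt _ _, by simp [axis_val]⟩

/-- The projection of `ℂ^n` along its `i`-th coordinate axis onto the hyperplane `x i = 0`. -/
noncomputable def offAxis (i : Fin n) : (Fin n → ℂ) →L[ℂ] (Fin n → ℂ) :=
  .id ℂ _ - .single ℂ (fun _ => ℂ) i ∘L .proj i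

lemma offAxis_apply (i : Fin n) (x : Fin n → ℂ) : offAxis i x = x - axis n i (x i) := by
  simp [offAxis, axis_val]

lemma offAxis_single_self (i : Fin n) (c : ℂ) : offAxis i (Pi.single i c) = 0 := by
  simp [offAxis_apply, axis_val]

lemma offAxis_axis (i : Fin n) (s : ℂ) : offAxis i (axis n i s) = 0 := by
  rw [axis_val, offAxis_single_self]

lemma offAxis_single_of_ne {i j : Fin n} (h : j ≠ i) (c : ℂ) :
    offAxis i (Pi.single j c) = Pi.single j c := by
  simp [offAxis_apply, axis_val, h.symm]

/-- Replacing `X` by its projection to the axis, which `g` maps into the axis, changes it by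
`offAxis i X`, so the quadratic part of `g` contributes only to order `r * s`. -/
lemma isBigO_offAxis_image_sub {α : Type*} {l : Filter α} {i : Fin n}
    {g : (Fin n → ℂ) → Fin n → ℂ} {k : ℂ → ℂ} (hg : AnalyticAt ℂ g 0)
    (hgk : (fun s => g (axis n i s)) =ᶠ[𝓝 0] fun s => axis n i (k s))
    {X : α → Fin n → ℂ} {r s : α → ℂ} (hr : Tendsto r l (𝓝 0)) (hX : X =O[l] r)
    (hs : (fun t => offAxis i (X t)) =O[l] s) :
    (fun t => offAxis i (g (X t)) - offAxis i (fderiv ℂ g 0 (offAxis i (X t)))) =O[l]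
      fun t => r t * s t := by
  have hXi : (fun t => X t i) =O[l] r := isBigO_pi.mp hX i
  have haxis : (fun t => axis n i (X t i)) =O[l] r :=
    (hX.sub (((offAxis i).isBigO_comp X l).trans hX)).congr_left fun t => by
      rw [offAxis_apply, sub_sub_cancel]
  have hlin := isBigO_image_sub_image_sub_fderiv hg hr (by simpa using hX) (by simpa using haxis)
    (by simpa only [offAxis_apply] using hs)
  refine (((offAxis i).isBigO_comp _ l).trans hlin).congr' ?_ .rfl
  filter_upwards [(hXi.trans_tendsto hr).eventually hgk] with t ht
  simp only [ht, map_sub, offAxis_axis, ← offAxis_apply, sub_zero]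

lemma isMultigerm_axis_pair {i j : Fin n} (hij : j ≠ i) {X : ℂ → Fin n → ℂ}
    (hX : IsCurveGerm n X) (hXj : ∀ᶠ t in 𝓝[≠] 0, X t j ≠ 0) :
    IsMultigerm n 2 ![axis n i, X] := by
  have hmeet : ∀ᶠ t in 𝓝 0, ∀ s, axis n i s = X t → X t = 0 := by
    filter_upwards [eventually_nhdsWithin_iff.mp hXj] with t ht s hst
    by_contra hXt
    have ht0 : t ≠ 0 := fun h => hXt (h ▸ hX.2)
    exact ht ht0 (by simp [← hst, axis_val, hij])
  obtain ⟨ε, hε, hball⟩ := Metric.eventually_nhds_iff.mp hmeet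
  simp only [dist_zero_right] at hball
  refine ⟨Fin.forall_fin_two.mpr ⟨isCurveGerm_axis i, hX⟩, ε, hε, ?_⟩
  simp only [Fin.forall_fin_two]
  refine ⟨⟨by simp, fun _ s t _ ht hst => ?_⟩, fun _ s t hs _ hst => ?_, by simp⟩
  · exact hst.trans (hball ht s hst)
  · exact hball hs t hst.symm

end Axis

section Modulus

variable {n : ℕ}

/-- The curves `(t³, t⁶ + a t⁸, t⁷ + c t⁸, 0, …, 0)` in `ℂ^(n+3)`, written as polynomials with
vector coefficients. The first coordinate is the tangential one; modulo `t⁹` these are the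
perturbations in order `8` of the given jet. -/
noncomputable def model (n : ℕ) (a c t : ℂ) : Fin (n + 3) → ℂ :=
  t ^ 3 • Pi.single 0 1 + t ^ 6 • Pi.single 1 1 + t ^ 7 • Pi.single 2 1 +
    t ^ 8 • (Pi.single 1 a + Pi.single 2 c)

lemma pad_eq_model (n : ℕ) (a c : ℂ) :
    (pad 3 (n + 3) fun t => ![t ^ 3, t ^ 6 + a * t ^ 8, t ^ 7 + c * t ^ 8]) = model n a c := by
  ext t ⟨_ | _ | _ | j, hj⟩ <;>
    simp [pad, model, Pi.single_apply, Fin.ext_iff, Fin.val_two, -Fin.coe_ofNat_eq_mod, mul_comm]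

lemma model_add (n : ℕ) (a c a' c' t : ℂ) :
    model n (a + a') (c + c') t = model n a c t + t ^ 8 • (Pi.single 1 a' + Pi.single 2 c') := by
  simp only [model, Pi.single_add]
  module

lemma analyticAt_model (n : ℕ) (a c : ℂ) : AnalyticAt ℂ (model n a c) 0 := by
  unfold model
  fun_prop

lemma fin_two_ne_zero : (2 : Fin (n + 3)) ≠ 0 := Fin.ne_of_val_ne (by rw [Fin.val_two]; simp)

lemma fin_two_ne_one : (2 : Fin (n + 3)) ≠ 1 := Fin.ne_of_val_ne (by rw [Fin.val_two]; simp)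

lemma model_coord_zero (a c t : ℂ) : model n a c t 0 = t ^ 3 := by
  simp [model, fin_two_ne_zero.symm]

lemma model_coord_one (a c t : ℂ) : model n a c t 1 = t ^ 6 + a * t ^ 8 := by
  simp [model, fin_two_ne_one.symm, mul_comm]

lemma offAxis_model (a c t : ℂ) : offAxis 0 (model n a c t) =
    t ^ 6 • Pi.single 1 1 + t ^ 7 • Pi.single 2 1 + t ^ 8 • (Pi.single 1 a + Pi.single 2 c) := by
  simp only [model, map_add, map_smul, offAxis_single_self, offAxis_single_of_ne one_ne_zero,
    offAxis_single_of_ne fin_two_ne_zero, smul_zero, zero_add]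

lemma isBigO_model (a c : ℂ) : model n a c =O[𝓝 0] fun t => t ^ 3 := by
  refine (isBigO_pow_smul (r := fun t => Pi.single 0 1 + t ^ 3 • Pi.single 1 1 +
    t ^ 4 • Pi.single 2 1 + t ^ 5 • (Pi.single 1 a + Pi.single 2 c)) (by fun_prop) 3).congr_left
    fun t => ?_
  simp only [model]
  module

lemma isBigO_offAxis_model (a c : ℂ) :
    (fun t => offAxis 0 (model n a c t)) =O[𝓝 0] fun t => t ^ 6 := by
  refine (isBigO_pow_smul (r := fun t => Pi.single 1 1 + t • Pi.single 2 1 +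
    t ^ 2 • (Pi.single 1 a + Pi.single 2 c)) (by fun_prop) 6).congr_left fun t => ?_
  rw [offAxis_model]
  module

lemma isBigO_of_isBigO_sub_model {X : ℂ → Fin (n + 3) → ℂ} {a c : ℂ}
    (hX : (fun t => X t - model n a c t) =O[𝓝 0] fun t => t ^ 9) :
    X =O[𝓝 0] fun t => t ^ 3 :=
  ((hX.trans (isBigO_pow_pow_of_le (by simp))).add (isBigO_model a c)).congr_left fun _ =>
    sub_add_cancel _ _

lemma isBigO_offAxis_of_isBigO_sub_model {X : ℂ → Fin (n + 3) → ℂ} {a c : ℂ}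
    (hX : (fun t => X t - model n a c t) =O[𝓝 0] fun t => t ^ 9) :
    (fun t => offAxis 0 (X t)) =O[𝓝 0] fun t => t ^ 6 :=
  (((((offAxis 0).isBigO_comp _ _).trans hX).trans (isBigO_pow_pow_of_le (by simp))).add
    (isBigO_offAxis_model a c)).congr_left fun t => by rw [map_sub, sub_add_cancel]

variable {g : (Fin (n + 3) → ℂ) → Fin (n + 3) → ℂ} {h : ℂ → ℂ} {X Y : ℂ → Fin (n + 3) → ℂ}
  {a c a' c' : ℂ}

lemma isBigO_comp_sub_model_comp (hh : IsBiholoGerm h)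
    (hY : (fun t => Y t - model n a c t) =O[𝓝 0] fun t => t ^ 9) :
    (fun t => Y (h t) - model n a c (h t)) =O[𝓝 0] fun t => t ^ 9 := by
  have hid : h =O[𝓝 0] fun t => t := by simpa [hh.2.1] using hh.1.differentiableAt.isBigO_sub
  exact (hY.comp_tendsto hh.tendsto_zero).trans (hid.pow 9)

lemma isBigO_cube_sub_fderiv_mul_cube (hg : IsBiholoGerm g) (hh : IsBiholoGerm h)
    (hX : (fun t => X t - model n a c t) =O[𝓝 0] fun t => t ^ 9)
    (hY : (fun t => Y t - model n a' c' t) =O[𝓝 0] fun t => t ^ 9)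
    (hgX : (fun t => g (X t)) =ᶠ[𝓝 0] fun t => Y (h t)) :
    (fun t => h t ^ 3 - fderiv ℂ g 0 (Pi.single 0 1) 0 * t ^ 3) =O[𝓝 0] fun t => t ^ 6 := by
  have hX₃ := isBigO_of_isBigO_sub_model hX
  have hquad : (fun t => g (X t) - fderiv ℂ g 0 (X t)) =O[𝓝 0] fun t => t ^ 6 := by
    refine (isBigO_image_sub_image_sub_fderiv (Y := 0) hg.1
      (tendsto_pow_nhds_zero three_ne_zero) (by simpa using hX₃)
      (by simpa using isBigO_zero _ _) (by simpa using hX₃)).congr (fun t => ?_) fun t => ?_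
    · simp [hg.2.1]
    · ring
  have hLX : (fun t => fderiv ℂ g 0 (X t - t ^ 3 • Pi.single 0 1)) =O[𝓝 0] fun t => t ^ 6 := by
    refine ((fderiv ℂ g 0).isBigO_comp _ _).trans <|
      ((hX.trans (isBigO_pow_pow_of_le (by simp))).add
        (isBigO_offAxis_model a c)).congr_left fun t => ?_
    rw [offAxis_apply, model_coord_zero, axis_val (0 : Fin (n + 3))]
    simp [← Pi.single_smul]
  have hYh := (isBigO_comp_sub_model_comp hh hY).trans (isBigO_pow_pow_of_le (n := 6) (by simp))
  have hsum := isBigO_pi.mp ((hquad.add hLX).sub hYh) 0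
  refine hsum.congr' ?_ .rfl
  filter_upwards [hgX] with t ht
  simp only [ht, map_sub, map_smul, Pi.add_apply, Pi.sub_apply, Pi.smul_apply, smul_eq_mul,
    model_coord_zero]
  ring

lemma isBigO_offAxis_comp_sub (hh : IsBiholoGerm h)
    (hY : (fun t => Y t - model n a c t) =O[𝓝 0] fun t => t ^ 9) {u : ℂ}
    (hu : ∀ q, (fun t => h t ^ q - (u * t) ^ q) =O[𝓝 0] fun t => t ^ (q + 3)) :
    (fun t => offAxis 0 (Y (h t)) - offAxis 0 (model n a c (u * t))) =O[𝓝 0] fun t => t ^ 9 := by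
  have hYh : (fun t => offAxis 0 (Y (h t) - model n a c (h t))) =O[𝓝 0] fun t => t ^ 9 :=
    ((offAxis 0).isBigO_comp _ _).trans (isBigO_comp_sub_model_comp hh hY)
  have hpow (q : ℕ) (hq : 6 ≤ q) (v : Fin (n + 3) → ℂ) :
      (fun t => (h t ^ q - (u * t) ^ q) • v) =O[𝓝 0] fun t => t ^ 9 := by
    simpa using ((hu q).trans (isBigO_pow_pow_of_le (by lia : 9 ≤ q + 3))).smul
      (isBigO_const_const v (one_ne_zero (α := ℂ)) (𝓝 0))
  refine (hYh.add (((hpow 6 le_rfl (Pi.single 1 1)).add (hpow 7 (by lia) (Pi.single 2 1))).add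
    (hpow 8 (by lia) (Pi.single 1 a + Pi.single 2 c)))).congr_left fun t => ?_
  simp only [map_sub, offAxis_model]
  module

lemma exists_linear_isBigO_offAxis_model_sub
    (hX : (fun t => X t - model n a c t) =O[𝓝 0] fun t => t ^ 9)
    (hY : (fun t => Y t - model n a' c' t) =O[𝓝 0] fun t => t ^ 9)
    (hXY : AEquiv (n + 3) 2 ![axis (n + 3) 0, X] ![axis (n + 3) 0, Y]) :
    ∃ u : ℂ, u ≠ 0 ∧ ∃ M : (Fin (n + 3) → ℂ) →L[ℂ] (Fin (n + 3) → ℂ),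
      (fun t => M (offAxis 0 (model n a c t)) - offAxis 0 (model n a' c' (u * t))) =O[𝓝 0]
        fun t => t ^ 9 := by
  obtain ⟨g, hg, p, hp, he⟩ := hXY
  have haxis : (fun s => g (axis (n + 3) 0 s)) =ᶠ[𝓝 0] fun s => axis (n + 3) 0 (p 0 s) := he 0
  have hgX : (fun t => g (X t)) =ᶠ[𝓝 0] fun t => Y (p 1 t) := he 1
  have hu : deriv (p 1) 0 ≠ 0 := (hp 1).deriv_ne_zero
  have hp₁ := isBigO_pow_sub_deriv_mul_pow (hp 1).1.differentiableAt (hp 1).2.1 hu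
    three_ne_zero three_ne_zero (isBigO_cube_sub_fderiv_mul_cube hg (hp 1) hX hY hgX)
  have hYp := isBigO_offAxis_comp_sub (hp 1) hY hp₁
  have hlin := isBigO_offAxis_image_sub (i := 0) hg.1 haxis
    (tendsto_pow_nhds_zero three_ne_zero) (isBigO_of_isBigO_sub_model hX)
    (isBigO_offAxis_of_isBigO_sub_model hX)
  let M := offAxis 0 ∘L fderiv ℂ g 0
  have hM : (fun t => M (offAxis 0 (X t - model n a c t))) =O[𝓝 0] fun t => t ^ 9 :=
    ((M ∘L offAxis 0).isBigO_comp _ _).trans hX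
  refine ⟨deriv (p 1) 0, hu, M, ((hYp.sub (hlin.congr_right fun t => ?_)).sub hM).congr' ?_ .rfl⟩
  · ring
  · filter_upwards [hgX] with t ht
    simp only [ht, M, map_sub, ContinuousLinearMap.comp_apply]
    abel

lemma exists_scaling_of_aEquiv_of_isBigO_sub_model
    (hX : (fun t => X t - model n a c t) =O[𝓝 0] fun t => t ^ 9)
    (hY : (fun t => Y t - model n a' c' t) =O[𝓝 0] fun t => t ^ 9)
    (hXY : AEquiv (n + 3) 2 ![axis (n + 3) 0, X] ![axis (n + 3) 0, Y]) :
    ∃ u : ℂ, u ≠ 0 ∧ a = a' * u ^ 2 ∧ c = c' * u := by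
  obtain ⟨u, hu, M, hM⟩ := exists_linear_isBigO_offAxis_model_sub hX hY hXY
  have hcoeff := eq_zero_of_sum_pow_smul_isBigO (n := 6)
    (v := ![M (Pi.single 1 1) - u ^ 6 • Pi.single 1 1,
      M (Pi.single 2 1) - u ^ 7 • Pi.single 2 1,
      M (Pi.single 1 a + Pi.single 2 c) - u ^ 8 • (Pi.single 1 a' + Pi.single 2 c')]) <|
    hM.congr_left fun t => by
      simp only [offAxis_model, map_add, map_smul, mul_pow, Fin.sum_univ_three, Matrix.cons_val,
        Fin.val_zero, Fin.val_one, Fin.val_two]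
      module
  have h₆ : M (Pi.single 1 1) = u ^ 6 • Pi.single 1 1 := sub_eq_zero.mp (congrFun hcoeff 0)
  have h₇ : M (Pi.single 2 1) = u ^ 7 • Pi.single 2 1 := sub_eq_zero.mp (congrFun hcoeff 1)
  have h₈ : M (Pi.single 1 a + Pi.single 2 c) = u ^ 8 • (Pi.single 1 a' + Pi.single 2 c') :=
    sub_eq_zero.mp (congrFun hcoeff 2)
  have hM₈ : M (Pi.single 1 a + Pi.single 2 c) =
      a • u ^ 6 • Pi.single 1 1 + c • u ^ 7 • Pi.single 2 1 := by
    rw [← h₆, ← h₇, ← map_smul, ← map_smul, ← map_add]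
    simp [← Pi.single_smul]
  have hcoord := hM₈.symm.trans h₈
  have h₁ : a * u ^ 6 = u ^ 8 * a' := by
    simpa [fin_two_ne_one.symm] using congrFun hcoord 1
  have h₂ : c * u ^ 7 = u ^ 8 * c' := by
    simpa [fin_two_ne_one] using congrFun hcoord 2
  refine ⟨u, hu, mul_right_cancel₀ (pow_ne_zero 6 hu) ?_, mul_right_cancel₀ (pow_ne_zero 7 hu) ?_⟩
  · linear_combination h₁
  · linear_combination h₂

lemma mul_sq_eq_mul_sq_of_aEquiv_of_isBigO_sub_model
    (hX : (fun t => X t - model n a c t) =O[𝓝 0] fun t => t ^ 9)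
    (hY : (fun t => Y t - model n a' c' t) =O[𝓝 0] fun t => t ^ 9)
    (hXY : AEquiv (n + 3) 2 ![axis (n + 3) 0, X] ![axis (n + 3) 0, Y]) :
    a * c' ^ 2 = a' * c ^ 2 := by
  obtain ⟨u, -, rfl, rfl⟩ := exists_scaling_of_aEquiv_of_isBigO_sub_model hX hY hXY
  ring

lemma isMultigerm_axis_pair_of_isBigO_sub_model (hX : IsCurveGerm (n + 3) X)
    (hXm : (fun t => X t - model n a c t) =O[𝓝 0] fun t => t ^ 9) :
    IsMultigerm (n + 3) 2 ![axis (n + 3) 0, X] := by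
  refine isMultigerm_axis_pair (i := 0) one_ne_zero hX ?_
  have hequiv : (fun t => X t 1) ~[𝓝 0] fun t => t ^ 6 := by
    have hsub : (fun t => X t 1 - model n a c t 1) =o[𝓝 0] fun t => t ^ 6 :=
      (isBigO_pi.mp hXm 1).trans_isLittleO (isLittleO_pow_pow (by simp))
    have hmodel : (fun t => a * t ^ 8) =o[𝓝 0] fun t => t ^ 6 :=
      (isLittleO_pow_pow (by simp)).const_mul_left a
    refine (hsub.add hmodel).congr_left fun t => ?_
    simp only [model_coord_one, Pi.sub_apply]
    ring
  filter_upwards [nhdsWithin_le_nhds hequiv.isBigO_symm.eq_zero_imp, self_mem_nhdsWithin] with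
    t ht ht0 hXt using pow_ne_zero 6 ht0 (ht hXt)

/-- The perturbation of a curve `X ≡ model n a c` by a term of order `8` that turns it into a
curve `≡ model n p.1 p.2`. -/
noncomputable def octicPerturbation (X : ℂ → Fin (n + 3) → ℂ) (a c : ℂ) (p : ℂ × ℂ) (t : ℂ) :
    Fin (n + 3) → ℂ :=
  X t + t ^ 8 • (Pi.single 1 (p.1 - a) + Pi.single 2 (p.2 - c))

lemma octicPerturbation_sub_model (p : ℂ × ℂ) (t : ℂ) :
    octicPerturbation X a c p t - model n p.1 p.2 t = X t - model n a c t := by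
  have hp := model_add n a c (p.1 - a) (p.2 - c) t
  rw [add_sub_cancel, add_sub_cancel] at hp
  rw [octicPerturbation, hp, add_sub_add_right_eq_sub]

lemma isCurveGerm_octicPerturbation (hX : IsCurveGerm (n + 3) X) (p : ℂ × ℂ) :
    IsCurveGerm (n + 3) (octicPerturbation X a c p) := by
  have hX₁ := hX.1
  refine ⟨?_, by simp [octicPerturbation, hX.2]⟩
  unfold octicPerturbation
  fun_prop

lemma tendsto_jet_octicPerturbation (hX : IsCurveGerm (n + 3) X) (a c : ℂ) (m : ℕ) :
    Tendsto (fun p => jet (n + 3) m (octicPerturbation X a c p)) (𝓝 (a, c))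
      (𝓝 (jet (n + 3) m X)) := by
  have hcont : Continuous fun p : ℂ × ℂ =>
      (Pi.single 1 (p.1 - a) + Pi.single 2 (p.2 - c) : Fin (n + 3) → ℂ) :=
    ((continuous_single 1).comp (by fun_prop)).add ((continuous_single 2).comp (by fun_prop))
  exact tendsto_jet_add_smul hX.1 (by fun_prop) (hcont.tendsto' _ _ (by simp)) m

end Modulus

end CurveSing

open CurveSing Asymptotics Filter in
theorem not_simple_jet8_t3_t6_t7_general (d : ℕ) (hd : 3 ≤ d) (a c : ℂ) (f : ℂ → Fin d → ℂ)
    (hf : IsCurveGerm d f)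
    (hjet : jet d 8 f =
      jet d 8 (pad 3 d fun t => ![t ^ 3, t ^ 6 + a * t ^ 8, t ^ 7 + c * t ^ 8])) :
    ¬ Simple d 2 ![axis d 0, f] := by
  obtain ⟨n, rfl⟩ : ∃ n, d = n + 3 := Nat.exists_eq_add_of_le' hd
  have hG (p : ℂ × ℂ) : (fun t => octicPerturbation f a c p t - model n p.1 p.2 t) =O[𝓝 0]
      fun t => t ^ 9 := by
    simp only [octicPerturbation_sub_model]
    exact isBigO_sub_of_jet_eq hf.1 (analyticAt_model n a c) (pad_eq_model n a c ▸ hjet)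
  refine not_simple_of_tendsto_jetF (l := 𝓝 (a, c))
    (G := fun p => ![axis (n + 3) 0, octicPerturbation f a c p])
    (fun p => isMultigerm_axis_pair_of_isBigO_sub_model
      (isCurveGerm_octicPerturbation hf p) (hG p)) (fun m => ?_) fun s hs => ?_
  · refine tendsto_pi_nhds.mpr (Fin.forall_fin_two.mpr ⟨tendsto_const_nhds, ?_⟩)
    exact tendsto_jet_octicPerturbation hf a c m
  · obtain ⟨u, hu, v, hv, huv⟩ := mem_nhds_prod_iff.mp hs
    obtain ⟨c₁, hc₁v, hc₁⟩ := (infinite_of_mem_nhds c hv).nontrivial.exists_ne 0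
    refine ⟨u ×ˢ {c₁}, (Set.prod_mono_right (by simpa)).trans huv,
      (infinite_of_mem_nhds a hu).prod_left ⟨c₁, rfl⟩, ?_⟩
    rintro ⟨a₁, _⟩ ⟨-, rfl⟩ ⟨a₂, _⟩ ⟨-, rfl⟩ hne hequiv
    have hmod := mul_sq_eq_mul_sq_of_aEquiv_of_isBigO_sub_model (hG _) (hG _) hequiv
    exact hne (Prod.ext (mul_right_cancel₀ (pow_ne_zero 2 hc₁) hmod) rfl)

open CurveSing in
/-- A pair whose second component has `8`-jet `(t³, t⁶, t⁷, 0, …, 0)` is not simple. -/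
theorem not_simple_jet8_t3_t6_t7 (d : ℕ) (hd : 3 ≤ d) (F : Fin 2 → ℂ → Fin d → ℂ)
    (hF : IsMultigerm d 2 F) (h1 : F 0 = axis d 0)
    (h2 : jet d 8 (F 1) = jet d 8 (pad 3 d fun t => ![t ^ 3, t ^ 6, t ^ 7])) :
    ¬ Simple d 2 F := by
  rw [show F = ![axis d 0, F 1] by ext i : 1; fin_cases i <;> simp [h1]]
  exact not_simple_jet8_t3_t6_t7_general d hd 0 0 (F 1) (hF.1 1) (by simpa using h2)
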